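/- The Eisenstein series E₄ satisfies the fourth-order nonlinear ODE 16Q₄ − 5P₄ − 144 = 0, which in cleared polynomial form states: for every τ ∈ ℍ, 16·E₄²·(20E₄E₄'''' − 140E₄'E₄''' + 126(E₄'')²)·A − 5B² − 144A³ = 0, where A = 4E₄E₄'' − 5(E₄')² and B = 16E₄²E₄''' − 72E₄E₄'E₄'' + 60(E₄')³. -/

import Mathlib

open Complex

noncomputable section

/-- The normalized derivative `F' = (2πi)⁻¹ dF/dτ`. -/
def nderiv (F : ℂ → ℂ) : ℂ → ℂ := fun τ => (2 * Real.pi * Complex.I)⁻¹ * deriv F τ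

/-- `q = e^{2πiτ}`. -/
def qq (τ : ℂ) : ℂ := Complex.exp (2 * Real.pi * Complex.I * τ)

/-- Sum of the `k`-th powers of the positive divisors of `n`. -/
def sigma' (k n : ℕ) : ℕ := ∑ d ∈ n.divisors, d ^ k

/-- The Eisenstein series `E₄`. -/
def E4 : ℂ → ℂ := fun τ => 1 + 240 * ∑' n : ℕ, (sigma' 3 (n + 1) : ℂ) * qq τ ^ (n + 1)

/-!
Write `P`, `Q`, `R` for `E2`, `E₄`, `E₆` and `A = 4QQ'' - 5Q'²`. The Serre derivatives of `P`, `Q`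
and `R` are modular of weight less than twelve, hence determined by their values at the cusp, which
gives Ramanujan's identities for `P'`, `Q'` and `R'`. These imply that `A` is a multiple of
`Q³ - R²` with `A' = PA`, and that `Q` solves the Kaneko–Zagier equation `6Q'' = 5PQ' - 10P'Q`.
Since the third and fourth derivatives of `Q` enter the ODE only through `A'` and `A''`, its
left-hand side becomes `8QA²` times `6Q'' - 5PQ' + 10P'Q`, which vanishes.
-/

open UpperHalfPlane hiding I im
open Filter Topology Manifold MatrixGroups ModularForm Derivative EisensteinSeries
open Function.Periodic (qParam)

/-! ### Limits at the cusp -/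

lemma tendsto_atImInfty_of_hasSum_qParam {h : ℝ} (hh : 0 < h) {f : ℍ → ℂ} {c : ℕ → ℂ}
    (hf : ∀ τ : ℍ, HasSum (fun m ↦ c m • qParam h τ ^ m) (f τ)) :
    Tendsto f atImInfty (𝓝 (c 0)) := by
  have hterm (m : ℕ) : Tendsto (fun τ : ℍ ↦ c m • qParam h τ ^ m) atImInfty (𝓝 (c m • 0 ^ m)) :=
    ((qParam_tendsto_atImInfty hh).pow m).const_smul (c m)
  have hbound : ∀ᶠ τ : ℍ in atImInfty, ∀ m,
      ‖c m • qParam h τ ^ m‖ ≤ ‖c m • qParam h UpperHalfPlane.I ^ m‖ := by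
    filter_upwards [atImInfty_basis.mem_of_mem (i := 1) trivial] with τ (hτ : 1 ≤ τ.im) m
    simp only [norm_smul, norm_pow, Function.Periodic.norm_qParam, coe_im, UpperHalfPlane.I_im]
    gcongr ‖c m‖ * Real.exp ?_ ^ m
    simp only [neg_mul]
    gcongr
  have htsum := tendsto_tsum_of_dominated_convergence (hf UpperHalfPlane.I).summable.norm
    hterm hbound
  rw [tsum_eq_single 0 fun m hm ↦ by rw [zero_pow hm, smul_zero]] at htsum
  simpa only [pow_zero, smul_eq_mul, mul_one] using htsum.congr fun τ ↦ (hf τ).tsum_eq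

lemma tendsto_E2_atImInfty : Tendsto E2 atImInfty (𝓝 1) :=
  tendsto_atImInfty_of_hasSum_qParam one_pos
    (c := fun m ↦ if m = 0 then 1 else -24 * ArithmeticFunction.sigma 1 m) fun τ ↦ by
      simpa only [qParam, ofReal_one, div_one] using hasSum_qExpansion_E2 (z := τ)

lemma tendsto_E_atImInfty {k : ℕ} (hk : 3 ≤ k) (hk' : Even k) :
    Tendsto (E hk) atImInfty (𝓝 1) :=
  E_qExpansion_coeff_zero hk hk' ▸ tendsto_atImInfty_of_hasSum_qParam one_pos
    (ModularForm.hasSum_qExpansion (E hk) one_pos one_mem_strictPeriods_SL)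

lemma tendsto_deriv_comap_im_atTop {V : Type*} [NormedAddCommGroup V] [NormedSpace ℂ V]
    {F : ℂ → V} {c : V} (hF : ∀ᶠ w in comap im atTop, DifferentiableAt ℂ F w)
    (hc : Tendsto F (comap im atTop) (𝓝 c)) :
    Tendsto (deriv F) (comap im atTop) (𝓝 0) := by
  rw [NormedAddGroup.tendsto_nhds_zero]
  intro ε hε
  have hnear : ∀ᶠ w in comap im atTop, DifferentiableAt ℂ F w ∧ ‖F w - c‖ < ε / 2 :=
    hF.and ((tendsto_iff_norm_sub_tendsto_zero.mp hc).eventually_lt_const (half_pos hε))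
  obtain ⟨A, -, hA⟩ := (atTop_basis.comap im).eventually_iff.mp hnear
  refine (atTop_basis.comap im).eventually_iff.mpr ⟨A + 1, trivial, fun z hz ↦ ?_⟩
  have hball {w : ℂ} (hw : w ∈ Metric.closedBall z 1) : A ≤ w.im := by
    have := (abs_im_le_norm (z - w)).trans (mem_closedBall_iff_norm'.mp hw)
    rw [sub_im, abs_le] at this
    linarith [show A + 1 ≤ z.im from hz]
  have hdiff : DiffContOnCl ℂ (fun w ↦ F w - c) (Metric.ball z 1) := by
    refine DifferentiableOn.diffContOnCl fun w hw ↦ ?_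
    rw [closure_ball z one_ne_zero] at hw
    exact ((hA (hball hw)).1.sub_const c).differentiableWithinAt
  calc ‖deriv F z‖ = ‖deriv (fun w ↦ F w - c) z‖ := by rw [deriv_sub_const]
    _ ≤ ε / 2 / 1 := Complex.norm_deriv_le_of_forall_mem_sphere_norm_le one_pos hdiff
        fun w hw ↦ (hA (hball (Metric.sphere_subset_closedBall hw))).2.le
    _ < ε := by linarith

section Limits

variable {f : ℍ → ℂ} {c : ℂ}

lemma tendsto_D_atImInfty (hf : MDiff f) (hc : Tendsto f atImInfty (𝓝 c)) :
    Tendsto (D f) atImInfty (𝓝 0) := by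
  have hdiff : ∀ᶠ w in comap im atTop, DifferentiableAt ℂ (f ∘ ofComplex) w := by
    filter_upwards [preimage_mem_comap (Ioi_mem_atTop 0)] with w hw
    exact (UpperHalfPlane.mdifferentiable_iff.mp hf).differentiableAt
      (isOpen_upperHalfPlaneSet.mem_nhds hw)
  have hderiv := tendsto_deriv_comap_im_atTop hdiff (hc.comp tendsto_comap_im_ofComplex)
  exact mul_zero (2 * Real.pi * I : ℂ)⁻¹ ▸ (hderiv.comp tendsto_coe_atImInfty).const_mul _

lemma tendsto_serreDerivative_atImInfty (k : ℂ) (hf : MDiff f) (hc : Tendsto f atImInfty (𝓝 c)) :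
    Tendsto (serreDerivative k f) atImInfty (𝓝 (-(k / 12) * c)) := by
  have := (tendsto_D_atImInfty hf hc).sub ((tendsto_E2_atImInfty.const_mul (k * 12⁻¹)).mul hc)
  convert! this using 2
  ring

end Limits

lemma eq_zero_of_isZeroAtImInfty_of_weight_lt_twelve {k : ℤ} (hk : k < 12) {f : ℍ → ℂ}
    (hf : MDiff f) (hinv : ∀ γ : SL(2, ℤ), f ∣[k] γ = f) (hzero : IsZeroAtImInfty f) : f = 0 := by
  let F : CuspForm 𝒮ℒ k :=
    { toFun := f
      slash_action_eq' := by
        rintro _ ⟨γ, rfl⟩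
        exact hinv γ
      holo' := hf
      zero_at_cusps' := fun {c} hc ↦ by
        rw [Subgroup.IsArithmetic.isCusp_iff_isCusp_SL2Z] at hc
        refine (OnePoint.isZeroAt_iff_forall_SL2Z hc).mpr fun γ _ ↦ ?_
        exact (hinv γ).symm ▸ hzero }
  have hF : F = 0 := rank_zero_iff_forall_zero.mp (CuspForm.rank_eq_zero_of_weight_lt_twelve hk) F
  exact congrArg DFunLike.coe hF

lemma slash_SL_eq {F : Type*} [FunLike F ℍ ℂ] {k : ℤ} [SlashInvariantFormClass F 𝒮ℒ k] (g : F)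
    (γ : SL(2, ℤ)) : ⇑g ∣[k] γ = g :=
  SlashInvariantForm.slash_action_eqn g _ ⟨γ, rfl⟩

lemma serreDerivative_eq_smul_of_weight_lt_twelve {w : ℤ} (hw : w < 12) {k c : ℂ} {f : ℍ → ℂ}
    (hf : MDiff f) (hinv : ∀ γ : SL(2, ℤ), serreDerivative k f ∣[w] γ = serreDerivative k f)
    (hfc : Tendsto f atImInfty (𝓝 c)) (g : ModularForm 𝒮ℒ w) (hgc : Tendsto g atImInfty (𝓝 c)) :
    serreDerivative k f = (-(k / 12)) • ⇑g := by
  refine sub_eq_zero.mp (eq_zero_of_isZeroAtImInfty_of_weight_lt_twelve hw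
    ((serreDerivative_mdifferentiable k hf).sub ((ModularFormClass.holo g).const_smul _))
    (fun γ ↦ ?_) ?_)
  · rw [sub_eq_add_neg, SlashAction.add_slash, SlashAction.neg_slash, ModularForm.SL_smul_slash,
      hinv γ, slash_SL_eq]
  · have := (tendsto_serreDerivative_atImInfty k hf hfc).sub (hgc.const_smul (-(k / 12)))
    rwa [smul_eq_mul, sub_self] at this

/-- The normalized logarithmic derivative `(2πi)⁻¹ c / (cz + d)` of the automorphy factor `cz + d`
of `γ`, which measures the failure of `E2` and of derivatives of modular forms to be modular. -/
def logDerivDenom (γ : SL(2, ℤ)) (z : ℍ) : ℂ := (2 * Real.pi * I)⁻¹ * (γ 1 0 / denom γ z)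

lemma mdifferentiable_logDerivDenom (γ : SL(2, ℤ)) : MDiff (logDerivDenom γ) :=
  ((mdifferentiable_inv_denom (γ : GL (Fin 2) ℝ)).const_smul (γ 1 0 : ℂ)).const_smul _

lemma D_logDerivDenom (γ : SL(2, ℤ)) : D (logDerivDenom γ) = -logDerivDenom γ ^ 2 := by
  ext z
  have hderiv := (hasDerivAt_denom_zpow (γ : GL (Fin 2) ℝ) (-1) z).const_mul
    ((2 * Real.pi * I)⁻¹ * (γ 1 0 : ℂ))
  have hcongr : logDerivDenom γ ∘ ofComplex =ᶠ[𝓝 (z : ℂ)]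
      fun w ↦ (2 * Real.pi * I)⁻¹ * (γ 1 0 : ℂ) * denom γ w ^ (-1 : ℤ) := by
    filter_upwards [isOpen_upperHalfPlaneSet.mem_nhds z.im_pos] with w hw
    simp [logDerivDenom, ofComplex_apply_of_im_pos hw, div_eq_mul_inv, mul_assoc]
  have hentry : ((γ : GL (Fin 2) ℝ) 1 0 : ℂ) = γ 1 0 := by simp
  rw [normalizedDerivOfComplex, (hderiv.congr_of_eventuallyEq hcongr).deriv, hentry]
  simp only [logDerivDenom, Pi.neg_apply, Pi.pow_apply, Int.cast_neg, Int.cast_one,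
    Int.reduceNeg, Int.reduceSub]
  field_simp

lemma E2_slash (γ : SL(2, ℤ)) : E2 ∣[(2 : ℤ)] γ = E2 + (12 : ℂ) • logDerivDenom γ := by
  ext z
  simp only [E2_slash_action, D2, riemannZeta_two, logDerivDenom, Pi.sub_apply, Pi.add_apply,
    Pi.smul_apply, smul_eq_mul]
  field_simp
  linear_combination (-12 * (γ 1 0 : ℂ)) * I_sq

lemma serreDerivative_E2_slash (γ : SL(2, ℤ)) :
    serreDerivative 1 E2 ∣[(4 : ℤ)] γ = serreDerivative 1 E2 := by
  have hsplit : serreDerivative 1 E2 = serreDerivative 2 E2 + (12⁻¹ : ℂ) • (E2 * E2) := by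
    ext z
    simp only [serreDerivative_apply, Pi.add_apply, Pi.smul_apply, Pi.mul_apply, smul_eq_mul]
    ring
  have hserre : serreDerivative 2 E2 ∣[(4 : ℤ)] γ =
      serreDerivative 2 (E2 + (12 : ℂ) • logDerivDenom γ) := by
    have := serreDerivative_slash_equivariant (k := 2) E2_mdifferentiable (γ := γ)
    rwa [E2_slash] at this
  have hsq : (E2 * E2) ∣[(4 : ℤ)] γ =
      (E2 + (12 : ℂ) • logDerivDenom γ) * (E2 + (12 : ℂ) • logDerivDenom γ) := by
    rw [← E2_slash]
    exact ModularForm.mul_slash_SL2 2 2 γ E2 E2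
  have hJ := mdifferentiable_logDerivDenom γ
  rw [hsplit, SlashAction.add_slash, ModularForm.SL_smul_slash, hserre, hsq]
  ext z
  simp only [Pi.add_apply, Pi.smul_apply, Pi.mul_apply, Pi.neg_apply, Pi.pow_apply, smul_eq_mul,
    serreDerivative_apply, normalizedDerivOfComplex_add _ _ E2_mdifferentiable (hJ.const_smul _),
    normalizedDerivOfComplex_smul _ _ hJ, D_logDerivDenom]
  ring

/-! ### Ramanujan's identities -/

lemma serreDerivative_E2 : serreDerivative 1 E2 = (-(1 / 12) : ℂ) • ⇑E₄ :=
  serreDerivative_eq_smul_of_weight_lt_twelve (by norm_num) E2_mdifferentiable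
    serreDerivative_E2_slash tendsto_E2_atImInfty E₄ (tendsto_E_atImInfty _ ⟨2, rfl⟩)

lemma serreDerivative_E₄ : serreDerivative 4 E₄ = (-(4 / 12) : ℂ) • ⇑E₆ :=
  serreDerivative_eq_smul_of_weight_lt_twelve (by norm_num) (ModularFormClass.holo E₄)
    (fun γ ↦ by exact_mod_cast
      serreDerivative_slash_invariant (ModularFormClass.holo E₄) (slash_SL_eq E₄ γ))
    (tendsto_E_atImInfty _ ⟨2, rfl⟩) E₆ (tendsto_E_atImInfty _ ⟨3, rfl⟩)

lemma serreDerivative_E₆ : serreDerivative 6 E₆ = (-(6 / 12) : ℂ) • (⇑E₄ * ⇑E₄) :=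
  have hlim := tendsto_E_atImInfty (k := 4) (by norm_num) ⟨2, rfl⟩
  serreDerivative_eq_smul_of_weight_lt_twelve (by norm_num) (ModularFormClass.holo E₆)
    (fun γ ↦ by exact_mod_cast
      serreDerivative_slash_invariant (ModularFormClass.holo E₆) (slash_SL_eq E₆ γ))
    (tendsto_E_atImInfty _ ⟨3, rfl⟩) (E₄.mul E₄) (by simpa using! hlim.mul hlim)

lemma D_E2 : D E2 = (1 / 12 : ℂ) • (E2 ^ 2 - ⇑E₄) := by
  ext z
  have := congrFun serreDerivative_E2 z
  simp only [serreDerivative_apply, Pi.smul_apply, Pi.sub_apply, Pi.pow_apply,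
    smul_eq_mul] at this ⊢
  linear_combination this

lemma D_E₄ : D E₄ = (1 / 3 : ℂ) • (E2 * ⇑E₄ - ⇑E₆) := by
  ext z
  have := congrFun serreDerivative_E₄ z
  simp only [serreDerivative_apply, Pi.smul_apply, Pi.sub_apply, Pi.mul_apply,
    smul_eq_mul] at this ⊢
  linear_combination this

lemma D_E₆ : D E₆ = (1 / 2 : ℂ) • (E2 * ⇑E₆ - ⇑E₄ ^ 2) := by
  ext z
  have := congrFun serreDerivative_E₆ z
  simp only [serreDerivative_apply, Pi.smul_apply, Pi.sub_apply, Pi.mul_apply, Pi.pow_apply,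
    smul_eq_mul] at this ⊢
  linear_combination this

/-! ### The Kaneko–Zagier equation -/

/-- The second Rankin–Cohen bracket of a form of weight four with itself, normalized as
`4 f f'' - 5 f' ^ 2`; it is a cusp form of weight twelve if `f` is a modular form of weight four. -/
def rankinCohenTwo (f : ℍ → ℂ) : ℍ → ℂ := (4 : ℂ) • (f * D (D f)) - (5 : ℂ) • D f ^ 2

section RankinCohen

variable {f P : ℍ → ℂ}

lemma mdifferentiable_rankinCohenTwo (hf : MDiff f) : MDiff (rankinCohenTwo f) :=
  have hf₁ := normalizedDerivOfComplex_mdifferentiable hf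
  ((hf.mul (normalizedDerivOfComplex_mdifferentiable hf₁)).const_smul _).sub
    ((hf₁.pow 2).const_smul _)

lemma D_rankinCohenTwo (hf : MDiff f) :
    D (rankinCohenTwo f) = (4 : ℂ) • (f * D (D (D f))) - (6 : ℂ) • (D f * D (D f)) := by
  have hf₁ := normalizedDerivOfComplex_mdifferentiable hf
  have hf₂ := normalizedDerivOfComplex_mdifferentiable hf₁
  have hmul := hf.mul hf₂
  rw [rankinCohenTwo,
    normalizedDerivOfComplex_sub _ _ (hmul.const_smul _) ((hf₁.pow 2).const_smul _),
    normalizedDerivOfComplex_smul _ _ hmul, normalizedDerivOfComplex_mul _ _ hf hf₂,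
    normalizedDerivOfComplex_smul _ _ (hf₁.pow 2), normalizedDerivOfComplex_pow _ _ hf₁]
  ext z
  simp only [Pi.sub_apply, Pi.add_apply, Pi.smul_apply, Pi.mul_apply, Pi.pow_apply,
    Nat.cast_ofNat, Pi.ofNat_apply, smul_eq_mul]
  ring

lemma D_D_rankinCohenTwo (hf : MDiff f) :
    D (D (rankinCohenTwo f)) = (4 : ℂ) • (f * D (D (D (D f)))) - (2 : ℂ) • (D f * D (D (D f))) -
      (6 : ℂ) • D (D f) ^ 2 := by
  have hf₁ := normalizedDerivOfComplex_mdifferentiable hf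
  have hf₂ := normalizedDerivOfComplex_mdifferentiable hf₁
  have hf₃ := normalizedDerivOfComplex_mdifferentiable hf₂
  have hmul := hf.mul hf₃
  have hmul₁ := hf₁.mul hf₂
  rw [D_rankinCohenTwo hf,
    normalizedDerivOfComplex_sub _ _ (hmul.const_smul _) (hmul₁.const_smul _),
    normalizedDerivOfComplex_smul _ _ hmul, normalizedDerivOfComplex_mul _ _ hf hf₃,
    normalizedDerivOfComplex_smul _ _ hmul₁, normalizedDerivOfComplex_mul _ _ hf₁ hf₂]
  ext z
  simp only [Pi.sub_apply, Pi.add_apply, Pi.smul_apply, Pi.mul_apply, Pi.pow_apply, smul_eq_mul]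
  ring

lemma fourthOrderODE_of_kanekoZagier (hf : MDiff f) (hP : MDiff P)
    (hKZ : D (D f) = (5 / 6 : ℂ) • (P * D f) - (5 / 3 : ℂ) • (D P * f))
    (hA : D (rankinCohenTwo f) = P * rankinCohenTwo f) (z : ℍ) :
    16 * f z ^ 2 * (20 * f z * D (D (D (D f))) z - 140 * D f z * D (D (D f)) z +
        126 * D (D f) z ^ 2) * rankinCohenTwo f z -
      5 * (16 * f z ^ 2 * D (D (D f)) z - 72 * f z * D f z * D (D f) z + 60 * D f z ^ 3) ^ 2 -
      144 * rankinCohenTwo f z ^ 3 = 0 := by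
  have hAA : D (D (rankinCohenTwo f)) = (D P + P ^ 2) * rankinCohenTwo f := by
    rw [hA, normalizedDerivOfComplex_mul _ _ hP (mdifferentiable_rankinCohenTwo hf), hA]
    ring
  have hKZz := congrFun hKZ z
  have hAz := congrFun hA z
  have hAAz := congrFun hAA z
  have hdef : rankinCohenTwo f z = 4 * (f z * D (D f) z) - 5 * D f z ^ 2 := rfl
  rw [D_rankinCohenTwo hf] at hAz
  rw [D_D_rankinCohenTwo hf] at hAAz
  simp only [Pi.sub_apply, Pi.add_apply, Pi.smul_apply, Pi.mul_apply, Pi.pow_apply,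
    smul_eq_mul] at hKZz hAz hAAz
  set A := rankinCohenTwo f z
  have hB : 16 * f z ^ 2 * D (D (D f)) z - 72 * f z * D f z * D (D f) z + 60 * D f z ^ 3 =
      4 * A * (P z * f z - 3 * D f z) := by
    linear_combination 4 * f z * hAz + 12 * D f z * hdef
  have hC : 2 * f z * (20 * f z * D (D (D (D f))) z - 140 * D f z * D (D (D f)) z +
      126 * D (D f) z ^ 2) =
      A * (10 * (D P z + P z ^ 2) * f z - 65 * P z * D f z + 78 * D (D f) z) := by
    linear_combination 10 * f z * hAAz - 65 * D f z * hAz - 78 * D (D f) z * hdef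
  rw [hB]
  linear_combination 8 * f z * A * hC + 48 * f z * A ^ 2 * hKZz - 144 * A ^ 2 * hdef

end RankinCohen

lemma D_D_E₄ : D (D E₄) =
    (5 / 36 : ℂ) • (E2 ^ 2 * ⇑E₄ + ⇑E₄ ^ 2 - (2 : ℂ) • (E2 * ⇑E₆)) := by
  have hE₄ := ModularFormClass.holo E₄
  have hE₆ := ModularFormClass.holo E₆
  have hmul := E2_mdifferentiable.mul hE₄
  rw [D_E₄, normalizedDerivOfComplex_smul _ _ (hmul.sub hE₆),
    normalizedDerivOfComplex_sub _ _ hmul hE₆,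
    normalizedDerivOfComplex_mul _ _ E2_mdifferentiable hE₄, D_E2, D_E₄, D_E₆]
  ext z
  simp only [Pi.sub_apply, Pi.add_apply, Pi.smul_apply, Pi.mul_apply, Pi.pow_apply, smul_eq_mul]
  ring

lemma kanekoZagier_E₄ :
    D (D E₄) = (5 / 6 : ℂ) • (E2 * D E₄) - (5 / 3 : ℂ) • (D E2 * ⇑E₄) := by
  rw [D_D_E₄, D_E₄, D_E2]
  ext z
  simp only [Pi.sub_apply, Pi.add_apply, Pi.smul_apply, Pi.mul_apply, Pi.pow_apply, smul_eq_mul]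
  ring

lemma rankinCohenTwo_E₄ : rankinCohenTwo E₄ = (5 / 9 : ℂ) • (⇑E₄ ^ 3 - ⇑E₆ ^ 2) := by
  rw [rankinCohenTwo, D_D_E₄, D_E₄]
  ext z
  simp only [Pi.sub_apply, Pi.add_apply, Pi.smul_apply, Pi.mul_apply, Pi.pow_apply, smul_eq_mul]
  ring

lemma D_rankinCohenTwo_E₄ : D (rankinCohenTwo E₄) = E2 * rankinCohenTwo E₄ := by
  have hE₄ := ModularFormClass.holo E₄
  have hE₆ := ModularFormClass.holo E₆
  rw [rankinCohenTwo_E₄, normalizedDerivOfComplex_smul _ _ ((hE₄.pow 3).sub (hE₆.pow 2)),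
    normalizedDerivOfComplex_sub _ _ (hE₄.pow 3) (hE₆.pow 2), normalizedDerivOfComplex_pow _ _ hE₄,
    normalizedDerivOfComplex_pow _ _ hE₆, D_E₄, D_E₆]
  ext z
  simp only [Pi.sub_apply, Pi.smul_apply, Pi.mul_apply, Pi.pow_apply, Nat.cast_ofNat,
    Pi.ofNat_apply, smul_eq_mul]
  ring

lemma E4_coe (z : ℍ) : E4 z = E₄ z := by
  have hbernoulli : bernoulli 4 = -1 / 30 := by norm_num [bernoulli, bernoulli'_four]
  rw [q_expansion_bernoulli (by norm_num) ⟨2, rfl⟩, hbernoulli]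
  simp only [zpow_natCast]
  rw [tsum_pnat_eq_tsum_succ
    (f := fun n ↦ (ArithmeticFunction.sigma 3 n : ℂ) * cexp (2 * Real.pi * I * z) ^ n)]
  simp only [E4, sigma', qq, ArithmeticFunction.sigma_apply]
  norm_num

lemma nderiv_coe {F : ℂ → ℂ} {f : ℍ → ℂ} (h : ∀ z : ℍ, F z = f z) (z : ℍ) :
    nderiv F z = D f z := by
  have hcongr : F =ᶠ[𝓝 (z : ℂ)] f ∘ ofComplex := by
    filter_upwards [isOpen_upperHalfPlaneSet.mem_nhds z.im_pos] with w hw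
    rw [Function.comp_apply, ofComplex_apply_of_im_pos hw, ← h]
  rw [nderiv, hcongr.deriv_eq, normalizedDerivOfComplex]

/-- The Eisenstein series `E₄` satisfies the fourth-order nonlinear ODE
`16Q₄ − 5P₄ − 144 = 0` in cleared polynomial form. -/
theorem E4_fourth_order_ODE :
    ∀ τ : ℂ, 0 < τ.im →
      let A := 4 * E4 τ * nderiv (nderiv E4) τ - 5 * (nderiv E4 τ) ^ 2
      let B := 16 * E4 τ ^ 2 * nderiv (nderiv (nderiv E4)) τ -
        72 * E4 τ * nderiv E4 τ * nderiv (nderiv E4) τ + 60 * (nderiv E4 τ) ^ 3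
      16 * E4 τ ^ 2 *
          (20 * E4 τ * nderiv (nderiv (nderiv (nderiv E4))) τ -
            140 * nderiv E4 τ * nderiv (nderiv (nderiv E4)) τ +
            126 * (nderiv (nderiv E4) τ) ^ 2) * A -
        5 * B ^ 2 - 144 * A ^ 3 = 0 := by
  intro τ hτ
  lift τ to ℍ using hτ
  have h₁ := nderiv_coe E4_coe
  have h₂ := nderiv_coe h₁
  have h₃ := nderiv_coe h₂
  have h₄ := nderiv_coe h₃
  have hode := fourthOrderODE_of_kanekoZagier (ModularFormClass.holo E₄) E2_mdifferentiable
    kanekoZagier_E₄ D_rankinCohenTwo_E₄ τ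
  simp only [E4_coe, h₁, h₂, h₃, h₄]
  simpa only [rankinCohenTwo, Pi.sub_apply, Pi.smul_apply, Pi.mul_apply, Pi.pow_apply, smul_eq_mul,
    mul_assoc] using hode
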